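/- arXiv:1602.08778 — 2 statements merged into one kernel-verified Lean document; each statement's English description precedes it below -/
import Mathlib

section
/- If every atom of a specification S is covered with respect to S by a program P, then P is semi-complete with respect to S; that is, for every query Q for which there exists a finite SLD-tree, and for every ground instance Qθ of Q with S ⊨ Qθ, Qθ is an answer of P (P ⊨ Qθ, equivalently all atoms of Qθ not equal to ! lie in the least Herbrand model M_P). -/
/-!
Semi-completeness holds because a true ground instance can be pushed from any node of an SLD-tree
down to one of its children. Let `Q` be the query of a node and `Qθ` a ground instance with
`S ⊨ Qθ`. If the selected atom is the cut, delete it. If it is an ordinary atom `A`, then `Aθ ∈ S`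
is the head of a ground instance `C₀σ` of a program clause with body true in `S`. The clause `C₀`
is applicable to `A` (`applicable_of_subst_eq`), so the tree has a child obtained with a variant
`C` of `C₀`. As `C` is standardized apart from `Q`, the substitution that agrees with `θ` on `Q`
and sends `C` to `C₀σ` is well defined; it unifies `A` with the head of `C`, hence factors through
the mgu. So replacing `Aθ` by the body of `C₀σ` in `Qθ` gives a ground instance of the child's
query, again true in `S` (`lift_resolvent`).

In a finite tree the descent stops, at an empty query. Going back up, every atom introduced on the
way is in the least Herbrand model, and therefore so is `Aθ`, as the head of `C₀σ`. The formal
argument is an induction on the length of nodes, bounded in a finite tree (`node_complete`).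
-/

/- Formalization of definite clause programs with the cut (Prolog),
   LD-resolution, LD-trees, pruning by the cut, specifications,
   correctness and completeness notions. -/

namespace LP

/-- First-order terms over function symbols `F`; variables are indexed by `ℕ`. -/
inductive Tm (F : Type) : Type
  | var : ℕ → Tm F
  | fn  : F → List (Tm F) → Tm F

/-- Ordinary (non-cut) atoms over function symbols `F` and predicate symbols `Pr`. -/
structure Atom (F Pr : Type) : Type where
  pred : Pr
  args : List (Tm F)

/-- Extended atoms: ordinary atoms together with the cut `!`. -/
inductive EAtom (F Pr : Type) : Type
  | cut : EAtom F Pr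
  | atm : Atom F Pr → EAtom F Pr

/-- A query is a finite sequence of extended atoms. -/
abbrev Query (F Pr : Type) := List (EAtom F Pr)

/-- A definite clause (whose body may contain cuts). -/
structure Clause (F Pr : Type) : Type where
  head : Atom F Pr
  body : Query F Pr

/-- A program (with cuts) is a finite sequence of clauses. -/
abbrev Prog (F Pr : Type) := List (Clause F Pr)

/-- Substitutions. -/
abbrev Subst (F : Type) := ℕ → Tm F

variable {F Pr : Type}

/-- The empty (identity) substitution. -/
def Subst.idS : Subst F := fun n => Tm.var n

/-- Applying a substitution to a term. -/
def Tm.subst (θ : Subst F) : Tm F → Tm F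
  | .var n => θ n
  | .fn f ts => .fn f (ts.attach.map (fun t => Tm.subst θ t.1))
decreasing_by
  have := List.sizeOf_lt_of_mem t.2
  simp only [Tm.fn.sizeOf_spec]
  omega

/-- The list of variables of a term. -/
def Tm.varsL : Tm F → List ℕ
  | .var n => [n]
  | .fn _ ts => ts.attach.flatMap (fun t => Tm.varsL t.1)
decreasing_by
  have := List.sizeOf_lt_of_mem t.2
  simp only [Tm.fn.sizeOf_spec]
  omega

/-- The set of variables of a term. -/
def Tm.vars (t : Tm F) : Set ℕ := {n | n ∈ t.varsL}

/-- A term is ground if it has no variables. -/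
def Tm.Ground (t : Tm F) : Prop := t.vars = ∅

def Atom.subst (θ : Subst F) (A : Atom F Pr) : Atom F Pr :=
  ⟨A.pred, A.args.map (Tm.subst θ)⟩

def Atom.vars (A : Atom F Pr) : Set ℕ := {n | ∃ t ∈ A.args, n ∈ t.vars}

/-- A ground atom (an element of the Herbrand base `HB` when it moreover holds). -/
def Atom.Ground (A : Atom F Pr) : Prop := A.vars = ∅

def EAtom.subst (θ : Subst F) : EAtom F Pr → EAtom F Pr
  | .cut => .cut
  | .atm A => .atm (Atom.subst θ A)

def EAtom.vars : EAtom F Pr → Set ℕ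
  | .cut => ∅
  | .atm A => A.vars

def EAtom.Ground (a : EAtom F Pr) : Prop := a.vars = ∅

def Query.subst (θ : Subst F) (Q : Query F Pr) : Query F Pr := Q.map (EAtom.subst θ)

def Query.vars (Q : Query F Pr) : Set ℕ := {n | ∃ a ∈ Q, n ∈ EAtom.vars a}

def Query.Ground (Q : Query F Pr) : Prop := Query.vars Q = ∅

def Clause.subst (θ : Subst F) (C : Clause F Pr) : Clause F Pr :=
  ⟨Atom.subst θ C.head, Query.subst θ C.body⟩

def Clause.vars (C : Clause F Pr) : Set ℕ := C.head.vars ∪ Query.vars C.body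

def Clause.Ground (C : Clause F Pr) : Prop := C.vars = ∅

/-- The domain of a substitution. -/
def Subst.dom (θ : Subst F) : Set ℕ := {n | θ n ≠ .var n}

/-- The range variables of a substitution. -/
def Subst.rng (θ : Subst F) : Set ℕ := {m | ∃ n, θ n ≠ .var n ∧ m ∈ (θ n).vars}

/-- All variables of a substitution. -/
def Subst.varSet (θ : Subst F) : Set ℕ := θ.dom ∪ θ.rng

/-- Composition: apply `θ` first, then `σ`. -/
def Subst.comp (θ σ : Subst F) : Subst F := fun n => (θ n).subst σ

/-- A substitution is idempotent when its domain and range are disjoint. -/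
def Subst.Idempotent (θ : Subst F) : Prop := Disjoint θ.dom θ.rng

/-- A substitution is ground if it maps every domain variable to a ground term. -/
def Subst.GroundOn (θ : Subst F) : Prop := ∀ n ∈ θ.dom, (θ n).Ground

/-- `compN θ i k` is the composition `θ i ; θ (i+1) ; ⋯ ; θ (i+k-1)`. -/
def compN (θ : ℕ → Subst F) : ℕ → ℕ → Subst F
  | _, 0 => Subst.idS
  | i, k+1 => Subst.comp (θ i) (compN θ (i+1) k)

/-- `θ` unifies atoms `A` and `B`. -/
def Unifies (θ : Subst F) (A B : Atom F Pr) : Prop := Atom.subst θ A = Atom.subst θ B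

/-- `θ` is a most general unifier of `A` and `B`. -/
def IsMgu (θ : Subst F) (A B : Atom F Pr) : Prop :=
  Unifies θ A B ∧ ∀ σ : Subst F, Unifies σ A B → ∃ δ : Subst F, ∀ n, σ n = (θ n).subst δ

/-- A unifier is relevant if all its variables occur in the unified atoms. -/
def Relevant (θ : Subst F) (A B : Atom F Pr) : Prop := θ.varSet ⊆ A.vars ∪ B.vars

/-- `B` is an instance of `A`. -/
def Atom.Inst (B A : Atom F Pr) : Prop := ∃ θ : Subst F, B = Atom.subst θ A

/-- `Q'` is an instance of `Q`. -/
def Query.Inst (Q' Q : Query F Pr) : Prop := ∃ θ : Subst F, Q' = Query.subst θ Q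

/-- `C'` is an instance of `C`. -/
def Clause.Inst (C' C : Clause F Pr) : Prop := ∃ θ : Subst F, C' = Clause.subst θ C

/-- `C` and `C'` are variants of each other. -/
def Variant (C C' : Clause F Pr) : Prop := Clause.Inst C C' ∧ Clause.Inst C' C

/-! ### Specifications -/

/-- Membership of an extended atom in `S ∪ {!}`. -/
def EAtomIn (S : Set (Atom F Pr)) : EAtom F Pr → Prop
  | .cut => True
  | .atm A => A ∈ S

/-- `S ⊨ Q`: every atom of `Q` is in `S ∪ {!}`. -/
def SpecModels (S : Set (Atom F Pr)) (Q : Query F Pr) : Prop := ∀ a ∈ Q, EAtomIn S a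

/-- A set of atoms is closed under substitution. -/
def SubstClosed (S : Set (Atom F Pr)) : Prop := ∀ A ∈ S, ∀ θ : Subst F, Atom.subst θ A ∈ S

/-- The restriction of a set of atoms to ground atoms (to `HB`). -/
def HBRestrict (S : Set (Atom F Pr)) : Set (Atom F Pr) := {A ∈ S | A.Ground}

/-- A ground atom `A` is covered by clause `C` w.r.t. `S`:
`A` is the head of a ground instance of `C` whose body atoms are in `S ∪ {!}`. -/
def CoveredBy (S : Set (Atom F Pr)) (C : Clause F Pr) (A : Atom F Pr) : Prop :=
  ∃ θ : Subst F, Clause.Ground (Clause.subst θ C) ∧ Atom.subst θ C.head = A ∧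
    SpecModels S (Query.subst θ C.body)

/-- The least Herbrand model of `P` (the cut is treated as true). -/
inductive MP (P : Prog F Pr) : Atom F Pr → Prop where
  | step : ∀ C ∈ P, ∀ θ : Subst F, Clause.Ground (Clause.subst θ C) →
      (∀ A : Atom F Pr, EAtom.atm A ∈ Query.subst θ C.body → MP P A) →
      MP P (Atom.subst θ C.head)

/-! ### General interpretations and logical consequence -/

structure Interp (F Pr : Type) : Type 1 where
  carrier : Type
  fnI : F → List carrier → carrier
  predI : Pr → List carrier → Prop

def Interp.evalTm (I : Interp F Pr) (v : ℕ → I.carrier) : Tm F → I.carrier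
  | .var n => v n
  | .fn f ts => I.fnI f (ts.attach.map (fun t => I.evalTm v t.1))
decreasing_by
  have := List.sizeOf_lt_of_mem t.2
  simp only [Tm.fn.sizeOf_spec]
  omega

def Interp.holdsA (I : Interp F Pr) (v : ℕ → I.carrier) (A : Atom F Pr) : Prop :=
  I.predI A.pred (A.args.map (I.evalTm v))

/-- The cut is true in every interpretation. -/
def Interp.holdsE (I : Interp F Pr) (v : ℕ → I.carrier) : EAtom F Pr → Prop
  | .cut => True
  | .atm A => I.holdsA v A

def Interp.holdsQ (I : Interp F Pr) (v : ℕ → I.carrier) (Q : Query F Pr) : Prop :=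
  ∀ a ∈ Q, I.holdsE v a

def Interp.ModelsClause (I : Interp F Pr) (C : Clause F Pr) : Prop :=
  ∀ v : ℕ → I.carrier, I.holdsQ v C.body → I.holdsA v C.head

def Interp.ModelsProg (I : Interp F Pr) (P : Prog F Pr) : Prop :=
  ∀ C ∈ P, I.ModelsClause C

/-- `P ⊨ Q` (truth of a formula is truth of its universal closure). -/
def Entails (P : Prog F Pr) (Q : Query F Pr) : Prop :=
  ∀ I : Interp F Pr, I.ModelsProg P → ∀ v : ℕ → I.carrier, I.holdsQ v Q

/-- `M` (a set of ground atoms) is a Herbrand model of `P`. -/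
def HerbModels (M : Set (Atom F Pr)) (P : Prog F Pr) : Prop :=
  ∀ C ∈ P, ∀ θ : Subst F, Clause.Ground (Clause.subst θ C) →
    (∀ A : Atom F Pr, EAtom.atm A ∈ Query.subst θ C.body → A ∈ M) →
    Atom.subst θ C.head ∈ M

/-- Removing all occurrences of the cut from a query. -/
def rmCutQ (Q : Query F Pr) : Query F Pr :=
  Q.filterMap (fun a => match a with | .cut => none | .atm A => some (.atm A))

/-- Removing all occurrences of the cut from a program. -/
def rmCutProg (P : Prog F Pr) : Prog F Pr := P.map (fun C => ⟨C.head, rmCutQ C.body⟩)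

/-! ### LD-derivations -/

/-- Variables occurring in the queries `Q 0 … Q i`, the mgu's `sub 0 … sub (i-1)`
and the clause variants `cls 0 … cls (i-1)` of a derivation. -/
def histVars (Q : ℕ → Query F Pr) (sub : ℕ → Subst F)
    (cls : ℕ → Option (Clause F Pr)) (i : ℕ) : Set ℕ :=
  {n | (∃ j ≤ i, n ∈ Query.vars (Q j)) ∨ (∃ j < i, n ∈ (sub j).varSet) ∨
       (∃ j < i, ∃ C : Clause F Pr, cls j = some C ∧ n ∈ C.vars)}

/-- One LD-resolution step (names the clause variant used, if any):
either a leading cut is deleted, or the first atom is resolved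
with a clause via an idempotent relevant mgu. -/
def DStep (Q Q' : Query F Pr) (θ : Subst F) (oc : Option (Clause F Pr)) : Prop :=
  (∃ rest : Query F Pr, Q = .cut :: rest ∧ Q' = rest ∧ θ = Subst.idS ∧ oc = none) ∨
  (∃ (A : Atom F Pr) (rest : Query F Pr) (C : Clause F Pr),
      Q = .atm A :: rest ∧ oc = some C ∧
      IsMgu θ A C.head ∧ θ.Idempotent ∧ Relevant θ A C.head ∧
      Q' = Query.subst θ (C.body ++ rest))

/-- A finite LD-derivation: queries `Q 0, …, Q len`,
mgu's `sub 0, …, sub (len-1)` and clause variants `cls 0, …, cls (len-1)`,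
with clause variants standardized apart. -/
structure Deriv (F Pr : Type) : Type where
  len : ℕ
  Q : ℕ → Query F Pr
  sub : ℕ → Subst F
  cls : ℕ → Option (Clause F Pr)
  step : ∀ i < len, DStep (Q i) (Q (i+1)) (sub i) (cls i)
  fresh : ∀ i < len, ∀ C : Clause F Pr, cls i = some C →
    Disjoint C.vars (histVars Q sub cls i)

/-- The derivation only uses (variants of) clauses of the program `P`. -/
def Deriv.FromProg (P : Prog F Pr) (D : Deriv F Pr) : Prop :=
  ∀ i < D.len, ∀ C : Clause F Pr, D.cls i = some C → ∃ C0 ∈ P, Variant C C0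

def Deriv.Successful (D : Deriv F Pr) : Prop := D.Q D.len = []

/-- The computed answer `Q0 θ1 ⋯ θn` of a derivation. -/
def Deriv.answer (D : Deriv F Pr) : Query F Pr := Query.subst (compN D.sub 0 D.len) (D.Q 0)

/-- At position `j` the query has a (protected) suffix of length `L`; the prefix
before it succeeds exactly at position `m` (the subderivation for the prefix ends there). -/
def Deriv.SuffixEndsAt (D : Deriv F Pr) (j L m : ℕ) : Prop :=
  j ≤ m ∧ m ≤ D.len ∧ (∀ i, j ≤ i → i < m → L < (D.Q i).length) ∧ (D.Q m).length = L

/-- An infinite LD-derivation. -/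
structure InfLD (F Pr : Type) (P : Prog F Pr) : Type where
  Q : ℕ → Query F Pr
  sub : ℕ → Subst F
  cls : ℕ → Option (Clause F Pr)
  step : ∀ i : ℕ, DStep (Q i) (Q (i+1)) (sub i) (cls i)
  fresh : ∀ i : ℕ, ∀ C : Clause F Pr, cls i = some C →
    Disjoint C.vars (histVars Q sub cls i)
  prog : ∀ i : ℕ, ∀ C : Clause F Pr, cls i = some C → ∃ C0 ∈ P, Variant C C0

/-- One SLD-resolution step, with an arbitrarily selected atom. -/
def SStep (Q Q' : Query F Pr) (θ : Subst F) (oc : Option (Clause F Pr)) : Prop :=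
  (∃ l r : Query F Pr, Q = l ++ .cut :: r ∧ Q' = l ++ r ∧ θ = Subst.idS ∧ oc = none) ∨
  (∃ (l r : Query F Pr) (A : Atom F Pr) (C : Clause F Pr),
      Q = l ++ .atm A :: r ∧ oc = some C ∧
      IsMgu θ A C.head ∧ θ.Idempotent ∧ Relevant θ A C.head ∧
      Q' = Query.subst θ (l ++ C.body ++ r))

/-- An infinite SLD-derivation (under an arbitrary selection rule). -/
structure InfSLD (F Pr : Type) (P : Prog F Pr) : Type where
  Q : ℕ → Query F Pr
  sub : ℕ → Subst F
  cls : ℕ → Option (Clause F Pr)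
  step : ∀ i : ℕ, SStep (Q i) (Q (i+1)) (sub i) (cls i)
  fresh : ∀ i : ℕ, ∀ C : Clause F Pr, cls i = some C →
    Disjoint C.vars (histVars Q sub cls i)
  prog : ∀ i : ℕ, ∀ C : Clause F Pr, cls i = some C → ∃ C0 ∈ P, Variant C C0

/-! ### Unrestricted LD-derivations and lifts -/

/-- One step of an unrestricted LD-derivation for program `P`. -/
def UStep (P : Prog F Pr) (Q Q' : Query F Pr) (θ : Subst F)
    (oc : Option (Clause F Pr)) : Prop :=
  (∃ rest : Query F Pr, Q = .cut :: rest ∧ Q' = rest ∧ θ = Subst.idS ∧ oc = none) ∨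
  (∃ (A : Atom F Pr) (rest B : Query F Pr) (C : Clause F Pr),
      Q = .atm A :: rest ∧ oc = some C ∧ C ∈ P ∧ Subst.dom θ ⊆ Query.vars Q ∧
      Clause.Inst ⟨Atom.subst θ A, B⟩ C ∧ Q' = B ++ Query.subst θ rest)

/-- A finite unrestricted LD-derivation for `P`. -/
structure UDeriv (F Pr : Type) (P : Prog F Pr) : Type where
  len : ℕ
  Q : ℕ → Query F Pr
  sub : ℕ → Subst F
  cls : ℕ → Option (Clause F Pr)
  step : ∀ i < len, UStep P (Q i) (Q (i+1)) (sub i) (cls i)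

def UDeriv.Successful {P : Prog F Pr} (E : UDeriv F Pr P) : Prop := E.Q E.len = []

def UDeriv.answer {P : Prog F Pr} (E : UDeriv F Pr P) : Query F Pr :=
  Query.subst (compN E.sub 0 E.len) (E.Q 0)

/-- The LD-derivation `D` is a lift of the unrestricted LD-derivation `E`. -/
def IsLift {P : Prog F Pr} (D : Deriv F Pr) (E : UDeriv F Pr P) : Prop :=
  Query.Inst (E.Q 0) (D.Q 0) ∧ D.len = E.len ∧
  (∀ i < D.len, (E.cls i = none ↔ D.cls i = none) ∧
    ∀ C C' : Clause F Pr, E.cls i = some C → D.cls i = some C' → Variant C' C)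

/-! ### c-s-specifications (call-success specifications) -/

/-- `P` is c-s-correct w.r.t. `(pre, post)`: in every LD-derivation beginning with an
atomic query from `pre`, each selected atom is in `pre ∪ {!}` and each atomic computed
answer of a successful subderivation is in `post ∪ {!}`. -/
def CsCorrect (P : Prog F Pr) (pre post : Set (Atom F Pr)) : Prop :=
  ∀ D : Deriv F Pr, D.FromProg P → (∃ A ∈ pre, D.Q 0 = [.atm A]) →
    (∀ i ≤ D.len, ∀ (a : EAtom F Pr) (rest : Query F Pr), D.Q i = a :: rest →
        a = .cut ∨ ∃ A ∈ pre, a = .atm A) ∧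
    (∀ j m : ℕ, ∀ (A : Atom F Pr) (rest : Query F Pr), D.Q j = .atm A :: rest →
        D.SuffixEndsAt j rest.length m →
        Atom.subst (compN D.sub j (m - j)) A ∈ post)

/-- The `i`-th element of `Q` (if any) is in `S ∪ {!}`. -/
def QIn (S : Set (Atom F Pr)) (Q : Query F Pr) (i : ℕ) : Prop :=
  ∀ a : EAtom F Pr, Q[i]? = some a → EAtomIn S a

/-- A clause is well-asserted w.r.t. a c-s-specification `(pre, post)`. -/
def WellAssertedClause (pre post : Set (Atom F Pr)) (C : Clause F Pr) : Prop :=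
  ∀ θ : Subst F, Atom.subst θ C.head ∈ pre →
    (∀ k < C.body.length,
      (∀ i < k, QIn post (Query.subst θ C.body) i) → QIn pre (Query.subst θ C.body) k) ∧
    ((∀ i < C.body.length, QIn post (Query.subst θ C.body) i) → Atom.subst θ C.head ∈ post)

/-- A query is well-asserted w.r.t. `(pre, post)`. -/
def WellAssertedQuery (pre post : Set (Atom F Pr)) (Q : Query F Pr) : Prop :=
  ∀ θ : Subst F, ∀ k < Q.length,
    (∀ i < k, QIn post (Query.subst θ Q) i) → QIn pre (Query.subst θ Q) k

/-! ### c-coveredness -/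

/-- Ground atom `A` is c-covered w.r.t. `S` and `(pre, post)` by the clause `C`,
which is (a variant of) the `i`-th clause of `P`. -/
def CCoveredBy (P : Prog F Pr) (S pre post : Set (Atom F Pr)) (A : Atom F Pr)
    (C : Clause F Pr) (i : ℕ) : Prop :=
  (∃ C0 : Clause F Pr, P[i]? = some C0 ∧ Variant C C0) ∧
  CoveredBy S C A ∧
  (∀ j < i, ∀ (H' : Atom F Pr) (A0 A1 : Query F Pr),
      P[j]? = some ⟨H', A0 ++ .cut :: A1⟩ → EAtom.cut ∉ A0 → H'.pred = C.head.pred →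
      ∀ H'' ∈ pre, Atom.Inst A H'' →
        ∀ θ : Subst F, Atom.Ground (Atom.subst θ H'') →
          ¬ CoveredBy (HBRestrict post) ⟨H', A0⟩ (Atom.subst θ H'')) ∧
  (∀ B0 B1 : Query F Pr, C.body = B0 ++ .cut :: B1 →
    ∀ ρ : Subst F, Subst.dom ρ ⊆ C.head.vars → (Subst.rng ρ ∩ C.vars) ⊆ C.head.vars →
      Disjoint (Subst.dom ρ) (Subst.rng ρ) →
      Atom.subst ρ C.head ∈ pre → Atom.Inst A (Atom.subst ρ C.head) →
      ∀ η : Subst F, Subst.dom η = Query.vars (Query.subst ρ B0) →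
        Query.Ground (Query.subst η (Query.subst ρ B0)) →
        SpecModels post (Query.subst η (Query.subst ρ B0)) →
        CoveredBy S ⟨Atom.subst η (Atom.subst ρ C.head),
                     Query.subst η (Query.subst ρ B1)⟩ A)

/-- `A` is c-covered by some clause of `P`. -/
def CCoveredByProg (P : Prog F Pr) (S pre post : Set (Atom F Pr)) (A : Atom F Pr) : Prop :=
  ∃ (i : ℕ) (C : Clause F Pr), P[i]? = some C ∧ CCoveredBy P S pre post A C i

/-! ### Level mappings, recurrence, acceptability -/

/-- Extension of a level mapping to extended atoms, with `|!| = 0`. -/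
def eLvl (lvl : Atom F Pr → ℕ) : EAtom F Pr → ℕ
  | .cut => 0
  | .atm A => lvl A

/-- `P` is recurrent w.r.t. the level mapping `lvl`. -/
def Recurrent (P : Prog F Pr) (lvl : Atom F Pr → ℕ) : Prop :=
  ∀ C ∈ P, ∀ θ : Subst F, Clause.Ground (Clause.subst θ C) →
    ∀ a ∈ Query.subst θ C.body, eLvl lvl a < lvl (Atom.subst θ C.head)

/-- `P` is acceptable w.r.t. the specification `S` and the level mapping `lvl`. -/
def Acceptable (P : Prog F Pr) (S : Set (Atom F Pr)) (lvl : Atom F Pr → ℕ) : Prop :=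
  (∀ A : Atom F Pr, MP P A → A ∈ S) ∧
  (∀ C ∈ P, ∀ θ : Subst F, Clause.Ground (Clause.subst θ C) →
    ∀ i < C.body.length, (∀ j < i, QIn S (Query.subst θ C.body) j) →
      ∀ a : EAtom F Pr, (Query.subst θ C.body)[i]? = some a →
        eLvl lvl a < lvl (Atom.subst θ C.head))

/-- A query is bounded w.r.t. a level mapping. -/
def BoundedQuery (lvl : Atom F Pr → ℕ) (Q : Query F Pr) : Prop :=
  ∃ k : ℕ, ∀ a ∈ Q, ∀ θ : Subst F, EAtom.Ground (EAtom.subst θ a) →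
    eLvl lvl (EAtom.subst θ a) < k

/-! ### Completeness notions -/

/-- `P` is complete for the query `Q` w.r.t. `S`. -/
def CompleteFor (P : Prog F Pr) (S : Set (Atom F Pr)) (Q : Query F Pr) : Prop :=
  ∀ θ : Subst F, Query.Ground (Query.subst θ Q) → SpecModels S (Query.subst θ Q) →
    ∀ A : Atom F Pr, EAtom.atm A ∈ Query.subst θ Q → MP P A

end LP

namespace LP

variable {F Pr : Type}

/-! ### LD-trees and SLD-trees -/

/-- A clause is applicable to an atom if (a variant of) its head unifies with it. -/
def Applicable (A : Atom F Pr) (C0 : Clause F Pr) : Prop :=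
  ∃ (C : Clause F Pr) (θ : Subst F), Variant C C0 ∧ Atom.subst θ A = Atom.subst θ C.head

open Classical in
/-- The clauses of `P` applicable to `A`, in program order. -/
noncomputable def applicables (P : Prog F Pr) (A : Atom F Pr) : Prog F Pr :=
  P.filter (fun C0 => decide (Applicable A C0))

/-- Variables occurring in the labels, mgu's and clause variants along the path
from the root to `p` (inclusive). -/
def pathVarsAux (label : List ℕ → Query F Pr) (esub : List ℕ → Subst F)
    (ecls : List ℕ → Option (Clause F Pr)) (p : List ℕ) : Set ℕ :=
  {n | ∃ q : List ℕ, q <+: p ∧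
        (n ∈ Query.vars (label q) ∨ n ∈ (esub q).varSet ∨
         ∃ C : Clause F Pr, ecls q = some C ∧ n ∈ C.vars)}

/-- The LD-tree for a program `P` and an initial query `Q0`.  Nodes are coded by
lists of child indices (the root is `[]`); `label` gives the query at a node,
`esub` and `ecls` the mgu and the clause variant of the edge into a node. -/
structure LDTree (F Pr : Type) (P : Prog F Pr) (Q0 : Query F Pr) : Type where
  dom : Set (List ℕ)
  label : List ℕ → Query F Pr
  esub : List ℕ → Subst F
  ecls : List ℕ → Option (Clause F Pr)
  root_mem : [] ∈ dom
  root_label : label [] = Q0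
  root_esub : esub [] = Subst.idS
  root_ecls : ecls [] = none
  prefix_closed : ∀ p q : List ℕ, p <+: q → q ∈ dom → p ∈ dom
  sibling_closed : ∀ (p : List ℕ) (k k' : ℕ), k' ≤ k → p ++ [k] ∈ dom → p ++ [k'] ∈ dom
  empty_leaf : ∀ p ∈ dom, label p = [] → ∀ k : ℕ, p ++ [k] ∉ dom
  cut_step : ∀ p ∈ dom, ∀ rest : Query F Pr, label p = .cut :: rest →
    (p ++ [0] ∈ dom ∧ label (p ++ [0]) = rest ∧ esub (p ++ [0]) = Subst.idS ∧
     ecls (p ++ [0]) = none ∧ ∀ k : ℕ, k ≠ 0 → p ++ [k] ∉ dom)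
  atom_children_mem : ∀ p ∈ dom, ∀ (A : Atom F Pr) (rest : Query F Pr),
    label p = .atm A :: rest →
    ∀ k : ℕ, (p ++ [k] ∈ dom ↔ k < (applicables P A).length)
  atom_step : ∀ p ∈ dom, ∀ (A : Atom F Pr) (rest : Query F Pr),
    label p = .atm A :: rest → ∀ k : ℕ, p ++ [k] ∈ dom →
      ∃ C C0 : Clause F Pr, (applicables P A)[k]? = some C0 ∧
        ecls (p ++ [k]) = some C ∧ Variant C C0 ∧
        IsMgu (esub (p ++ [k])) A C.head ∧ (esub (p ++ [k])).Idempotent ∧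
        Relevant (esub (p ++ [k])) A C.head ∧
        label (p ++ [k]) = Query.subst (esub (p ++ [k])) (C.body ++ rest) ∧
        Disjoint C.vars (pathVarsAux label esub ecls p)

/-- An SLD-tree for `P` and `Q0`, under the selection rule `sel`
(`sel p` is the position of the selected atom of the query at node `p`). -/
structure SLDTree (F Pr : Type) (P : Prog F Pr) (Q0 : Query F Pr) : Type where
  dom : Set (List ℕ)
  label : List ℕ → Query F Pr
  sel : List ℕ → ℕ
  esub : List ℕ → Subst F
  ecls : List ℕ → Option (Clause F Pr)
  root_mem : [] ∈ dom
  root_label : label [] = Q0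
  root_esub : esub [] = Subst.idS
  root_ecls : ecls [] = none
  prefix_closed : ∀ p q : List ℕ, p <+: q → q ∈ dom → p ∈ dom
  sibling_closed : ∀ (p : List ℕ) (k k' : ℕ), k' ≤ k → p ++ [k] ∈ dom → p ++ [k'] ∈ dom
  empty_leaf : ∀ p ∈ dom, label p = [] → ∀ k : ℕ, p ++ [k] ∉ dom
  sel_lt : ∀ p ∈ dom, label p ≠ [] → sel p < (label p).length
  cut_step : ∀ p ∈ dom, ∀ l r : Query F Pr, label p = l ++ .cut :: r → sel p = l.length →
    (p ++ [0] ∈ dom ∧ label (p ++ [0]) = l ++ r ∧ esub (p ++ [0]) = Subst.idS ∧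
     ecls (p ++ [0]) = none ∧ ∀ k : ℕ, k ≠ 0 → p ++ [k] ∉ dom)
  atom_children_mem : ∀ p ∈ dom, ∀ (l : Query F Pr) (A : Atom F Pr) (r : Query F Pr),
    label p = l ++ .atm A :: r → sel p = l.length →
    ∀ k : ℕ, (p ++ [k] ∈ dom ↔ k < (applicables P A).length)
  atom_step : ∀ p ∈ dom, ∀ (l : Query F Pr) (A : Atom F Pr) (r : Query F Pr),
    label p = l ++ .atm A :: r → sel p = l.length → ∀ k : ℕ, p ++ [k] ∈ dom →
      ∃ C C0 : Clause F Pr, (applicables P A)[k]? = some C0 ∧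
        ecls (p ++ [k]) = some C ∧ Variant C C0 ∧
        IsMgu (esub (p ++ [k])) A C.head ∧ (esub (p ++ [k])).Idempotent ∧
        Relevant (esub (p ++ [k])) A C.head ∧
        label (p ++ [k]) = Query.subst (esub (p ++ [k])) (l ++ C.body ++ r) ∧
        Disjoint C.vars (pathVarsAux label esub ecls p)

/-- `P` is semi-complete w.r.t. `S`: complete for every query possessing a finite SLD-tree. -/
def SemiComplete (P : Prog F Pr) (S : Set (Atom F Pr)) : Prop :=
  ∀ Q : Query F Pr, (∃ T : SLDTree F Pr P Q, T.dom.Finite) → CompleteFor P S Q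

/-! ### The preorder sequence `seq(T)` and pruning -/

/-- The subtree of `S` rooted at `q` is finite. -/
def SubtreeFin (S : Set (List ℕ)) (q : List ℕ) : Prop := {x ∈ S | q <+: x}.Finite

/-- Node `p` occurs in the preorder sequence `seq` of the subgraph `S`:
all subtrees to the left of the path to `p` are finite. -/
def InSeq (S : Set (List ℕ)) (p : List ℕ) : Prop :=
  p ∈ S ∧ ∀ (q : List ℕ) (k k' : ℕ), (q ++ [k]) <+: p → k' < k → SubtreeFin S (q ++ [k'])

/-- `p` strictly precedes `q` in the preorder ordering of tree nodes. -/
def PreLt (p q : List ℕ) : Prop :=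
  (p <+: q ∧ p ≠ q) ∨
  ∃ (r : List ℕ) (a b : ℕ), a < b ∧ (r ++ [a]) <+: p ∧ (r ++ [b]) <+: q

variable {P : Prog F Pr} {Q0 : Query F Pr}

/-- An executing node: a node whose query starts with the cut. -/
def LDTree.ExecNode (T : LDTree F Pr P Q0) (e : List ℕ) : Prop :=
  ∃ rest : Query F Pr, T.label e = .cut :: rest

/-- `s` is the first node `Q_j` of the cutting sequence of the executing node `e`:
the protected suffix of length `|label e|` persists from `s` to `e`,
and `s` is the shallowest such node. -/
def LDTree.CutStart (T : LDTree F Pr P Q0) (e s : List ℕ) : Prop :=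
  s <+: e ∧
  (∀ q : List ℕ, s <+: q → q <+: e → q ≠ e → (T.label e).length < (T.label q).length) ∧
  (s = [] ∨ ∃ (p : List ℕ) (k : ℕ), s = p ++ [k] ∧
      ¬ ((T.label e).length < (T.label p).length))

/-- The introducing node of a cutting sequence starting at `s`
(for a cut of the initial query it is the root itself). -/
def cutIntro (s : List ℕ) : List ℕ := if s = [] then [] else s.dropLast

/-- `x` is pruned by (the cutting sequence of) the executing node `e`:
`x` lies in a subtree rooted at a child, to the right of the cutting sequence,
of a node of the cutting sequence. -/
def LDTree.PrunedByExec (T : LDTree F Pr P Q0) (e x : List ℕ) : Prop :=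
  T.ExecNode e ∧ ∃ s : List ℕ, T.CutStart e s ∧
    ∃ (q : List ℕ) (k k' : ℕ), cutIntro s <+: q ∧ (q ++ [k]) <+: e ∧ k < k' ∧
      (q ++ [k']) <+: x

/-- `e` is the (n+1)-st executing node in the preorder sequence of the subgraph `S`. -/
def LDTree.IsNthExec (T : LDTree F Pr P Q0) (S : Set (List ℕ)) (n : ℕ) (e : List ℕ) : Prop :=
  e ∈ S ∧ T.ExecNode e ∧ InSeq S e ∧
  {e' : List ℕ | e' ∈ S ∧ T.ExecNode e' ∧ InSeq S e' ∧ PreLt e' e}.Finite ∧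
  {e' : List ℕ | e' ∈ S ∧ T.ExecNode e' ∧ InSeq S e' ∧ PreLt e' e}.ncard = n

/-- The sequence of trees `T_0, T_1, …` of the definition of the pruned LD-tree. -/
def LDTree.stage (T : LDTree F Pr P Q0) : ℕ → Set (List ℕ)
  | 0 => T.dom
  | n+1 => T.stage n \
      {x : List ℕ | ∃ e : List ℕ, T.IsNthExec (T.stage n) n e ∧ T.PrunedByExec e x}

/-- The pruned LD-tree `pruned(T)`: the nodes surviving all stages
and occurring in the preorder sequence of the resulting subgraph. -/
def LDTree.prunedDom (T : LDTree F Pr P Q0) : Set (List ℕ) :=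
  {p ∈ ⋂ n : ℕ, T.stage n | InSeq (⋂ n : ℕ, T.stage n) p}

/-- Composition of the mgu's along a path (auxiliary, from node `q` down `rest`). -/
def LDTree.branchSubstAux (T : LDTree F Pr P Q0) : List ℕ → List ℕ → Subst F
  | _, [] => Subst.idS
  | q, k :: rest => Subst.comp (T.esub (q ++ [k])) (T.branchSubstAux (q ++ [k]) rest)

/-- Composition of the mgu's along the branch from the root to `p`. -/
def LDTree.branchSubst (T : LDTree F Pr P Q0) (p : List ℕ) : Subst F :=
  T.branchSubstAux [] p

/-- The node `p` occurs in a cutting sequence of the subgraph `S` of `T`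
only as its introducing node. -/
def LDTree.OnlyIntro (T : LDTree F Pr P Q0) (S : Set (List ℕ)) (p : List ℕ) : Prop :=
  ∀ e s : List ℕ, e ∈ S → T.ExecNode e → T.CutStart e s →
    (∀ q : List ℕ, cutIntro s <+: q → q <+: e → q ∈ S) →
    cutIntro s <+: p → p <+: e → (s ≠ [] ∧ p = cutIntro s)

end LP

namespace LP

/-! ### Substitutions and variables -/

theorem Tm.subst_fn {F : Type} (θ : Subst F) (f : F) (ts : List (Tm F)) :
    (Tm.fn f ts).subst θ = .fn f (ts.map (Tm.subst θ)) := by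
  rw [Tm.subst]; simp

theorem Tm.mem_vars_var {F : Type} (n m : ℕ) :
    n ∈ (Tm.var m : Tm F).vars ↔ n = m := by
  simp [Tm.vars, Tm.varsL]

theorem Tm.mem_vars_fn {F : Type} (n : ℕ) (f : F) (ts : List (Tm F)) :
    n ∈ (Tm.fn f ts).vars ↔ ∃ t ∈ ts, n ∈ t.vars := by
  simp [Tm.vars, Tm.varsL]

/-- Structural induction on terms, with the induction hypothesis for all members of an argument
list. -/
theorem Tm.ind {F : Type} {motive : Tm F → Prop} (hv : ∀ n, motive (.var n))
    (hf : ∀ f ts, (∀ t ∈ ts, motive t) → motive (.fn f ts)) : ∀ t, motive t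
  | .var n => hv n
  | .fn f ts => hf f ts (fun t _ => Tm.ind hv hf t)

theorem Tm.subst_congr {F : Type} {θ σ : Subst F} (t : Tm F)
    (h : ∀ n ∈ t.vars, θ n = σ n) : t.subst θ = t.subst σ := by
  induction t using Tm.ind with
  | hv n => simpa [Tm.subst] using h n ((Tm.mem_vars_var n n).2 rfl)
  | hf f ts ih =>
    rw [Tm.subst_fn, Tm.subst_fn, List.map_congr_left]
    exact fun t ht => ih t ht fun n hn => h n ((Tm.mem_vars_fn _ _ _).2 ⟨t, ht, hn⟩)

theorem Tm.subst_subst {F : Type} (θ σ : Subst F) (t : Tm F) :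
    (t.subst θ).subst σ = t.subst (θ.comp σ) := by
  induction t using Tm.ind with
  | hv n => simp [Tm.subst, Subst.comp]
  | hf f ts ih => simpa [Tm.subst_fn] using ih

theorem Tm.subst_id {F : Type} (t : Tm F) : t.subst Subst.idS = t := by
  induction t using Tm.ind with
  | hv n => simp [Tm.subst, Subst.idS]
  | hf f ts ih =>
    rw [Tm.subst_fn, List.map_congr_left (g := id) ih, List.map_id]

theorem Atom.subst_congr {F Pr : Type} {θ σ : Subst F} (A : Atom F Pr)
    (h : ∀ n ∈ A.vars, θ n = σ n) : A.subst θ = A.subst σ := by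
  unfold Atom.subst
  rw [List.map_congr_left]
  exact fun t ht => Tm.subst_congr t fun n hn => h n ⟨t, ht, hn⟩

theorem Atom.subst_subst {F Pr : Type} (θ σ : Subst F) (A : Atom F Pr) :
    (A.subst θ).subst σ = A.subst (θ.comp σ) := by
  simp [Atom.subst, Tm.subst_subst]

theorem Atom.subst_id {F Pr : Type} (A : Atom F Pr) : A.subst Subst.idS = A := by
  have : (Tm.subst (Subst.idS : Subst F)) = id := funext Tm.subst_id
  simp [Atom.subst, this]

theorem Query.subst_congr {F Pr : Type} {θ σ : Subst F} (Q : Query F Pr)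
    (h : ∀ n ∈ Query.vars Q, θ n = σ n) : Query.subst θ Q = Query.subst σ Q := by
  unfold Query.subst
  refine List.map_congr_left fun a ha => ?_
  cases a with
  | cut => rfl
  | atm A => exact congrArg _ (Atom.subst_congr A fun n hn => h n ⟨_, ha, hn⟩)

theorem Query.subst_subst {F Pr : Type} (θ σ : Subst F) (Q : Query F Pr) :
    Query.subst σ (Query.subst θ Q) = Query.subst (θ.comp σ) Q := by
  unfold Query.subst
  rw [List.map_map]
  refine List.map_congr_left fun a _ => ?_
  cases a with
  | cut => rfl
  | atm A => exact congrArg _ (Atom.subst_subst θ σ A)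

theorem Query.subst_id {F Pr : Type} (Q : Query F Pr) : Query.subst Subst.idS Q = Q := by
  unfold Query.subst
  refine (List.map_congr_left (g := id) fun a _ => ?_).trans (List.map_id _)
  cases a with
  | cut => rfl
  | atm A => exact congrArg _ (Atom.subst_id A)

theorem Clause.subst_subst {F Pr : Type} (θ σ : Subst F) (C : Clause F Pr) :
    (C.subst θ).subst σ = C.subst (θ.comp σ) := by
  simp [Clause.subst, Atom.subst_subst, Query.subst_subst]

theorem Clause.subst_id {F Pr : Type} (C : Clause F Pr) : C.subst Subst.idS = C := by
  simp [Clause.subst, Atom.subst_id, Query.subst_id]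

theorem Clause.subst_congr {F Pr : Type} {θ σ : Subst F} (C : Clause F Pr)
    (h : ∀ n ∈ C.vars, θ n = σ n) : C.subst θ = C.subst σ := by
  unfold Clause.subst
  rw [Atom.subst_congr C.head fun n hn => h n (Or.inl hn),
    Query.subst_congr C.body fun n hn => h n (Or.inr hn)]

theorem Query.ground_iff {F Pr : Type} (Q : Query F Pr) :
    Query.Ground Q ↔ ∀ a ∈ Q, a.Ground := by
  simp only [Query.Ground, EAtom.Ground, Query.vars, Set.eq_empty_iff_forall_notMem,
    Set.mem_ofPred_eq, not_exists, not_and]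
  exact ⟨fun h a ha n => h n a ha, fun h n a ha => h a ha n⟩

theorem Atom.exists_var_bound {F Pr : Type} (A : Atom F Pr) : ∃ N, ∀ n ∈ A.vars, n < N := by
  have hfin : A.vars.Finite := by
    have : A.vars = ⋃ t ∈ {t | t ∈ A.args}, {n | n ∈ t.varsL} := by
      ext n; simp [Atom.vars, Tm.vars]
    rw [this]
    exact (List.finite_toSet A.args).biUnion fun t _ => List.finite_toSet t.varsL
  obtain ⟨N, hN⟩ := hfin.bddAbove
  exact ⟨N + 1, fun n hn => Nat.lt_succ_of_le (hN hn)⟩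

/-! ### Descent to a child -/

/-- If an instance of `A` equals an instance of the head of `C₀`, then `C₀` is applicable to `A`.
The variant required is `C₀` with all variables shifted beyond those of `A`. -/
theorem applicable_of_subst_eq {F Pr : Type} {A : Atom F Pr} {C₀ : Clause F Pr} {θ σ : Subst F}
    (h : A.subst θ = C₀.head.subst σ) : Applicable A C₀ := by
  obtain ⟨N, hN⟩ := A.exists_var_bound
  let up : Subst F := fun n => .var (n + N)
  let down : Subst F := fun n => .var (n - N)
  have hud : up.comp down = Subst.idS := by
    funext n; simp [up, down, Subst.comp, Tm.subst, Subst.idS]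
  refine ⟨C₀.subst up, fun n => if n < N then θ n else σ (n - N), ⟨⟨up, rfl⟩, down, ?_⟩, ?_⟩
  · rw [Clause.subst_subst, hud, Clause.subst_id]
  · rw [Atom.subst_congr (σ := θ) A fun n hn => if_pos (hN n hn), h]
    change _ = Atom.subst _ (Atom.subst up C₀.head)
    rw [Atom.subst_subst]
    refine Atom.subst_congr _ fun n _ => ?_
    simp [up, Subst.comp, Tm.subst]

/-- A ground resolution step, replacing `Aθ = Hσ` by `Bσ` where `C₀ = H ← B`, is an instance of
the resolution step that uses an mgu `μ` and a variant `C` of `C₀` sharing no variable with the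
query. -/
theorem lift_resolvent {F Pr : Type} {l r : Query F Pr} {A : Atom F Pr} {C C₀ : Clause F Pr}
    {θ σ μ : Subst F} (h : A.subst θ = C₀.head.subst σ) (hvar : Variant C C₀)
    (hmgu : IsMgu μ A C.head) (hdisj : Disjoint C.vars (Query.vars (l ++ .atm A :: r))) :
    ∃ δ : Subst F, Query.subst δ (Query.subst μ (l ++ C.body ++ r)) =
      Query.subst θ l ++ Query.subst σ C₀.body ++ Query.subst θ r := by
  classical
  obtain ⟨-, τ, rfl⟩ := hvar
  -- `η` acts as `θ` on the query and sends `C` to the given ground instance of `C₀`.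
  let η : Subst F := fun n => if n ∈ C.vars then (τ.comp σ) n else θ n
  have hηC : C.subst η = (C.subst τ).subst σ := by
    rw [Clause.subst_subst]
    exact Clause.subst_congr C fun n hn => if_pos hn
  have hηQ : ∀ n ∈ Query.vars (l ++ .atm A :: r), η n = θ n := fun n hn =>
    if_neg fun hn' => Set.disjoint_left.1 hdisj hn' hn
  have hηA : A.subst η = A.subst θ :=
    Atom.subst_congr A fun n hn => hηQ n ⟨.atm A, by simp, hn⟩
  have hηl : Query.subst η l = Query.subst θ l :=
    Query.subst_congr l fun n ⟨a, ha, hn⟩ => hηQ n ⟨a, by simp [ha], hn⟩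
  have hηr : Query.subst η r = Query.subst θ r :=
    Query.subst_congr r fun n ⟨a, ha, hn⟩ => hηQ n ⟨a, by simp [ha], hn⟩
  have hunif : Unifies η A C.head := by
    unfold Unifies
    rw [hηA, h]
    exact (congrArg Clause.head hηC).symm
  obtain ⟨δ, hδ⟩ := hmgu.2 η hunif
  refine ⟨δ, ?_⟩
  have hbody : Query.subst η C.body = Query.subst σ (C.subst τ).body :=
    congrArg Clause.body hηC
  rw [Query.subst_subst, show μ.comp δ = η from (funext hδ).symm, ← hbody, ← hηl, ← hηr]
  simp [Query.subst]

/-! ### Completeness at the nodes of a finite tree -/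

/-- Every ground instance, true in `S`, of the query at a node is true in the least Herbrand
model. Nodes have length less than `N`, so `k` with `N ≤ p.length + k` bounds the depth
of the tree below the node `p`. -/
theorem node_complete {F Pr : Type} {P : Prog F Pr} {S : Set (Atom F Pr)}
    (hcov : ∀ A ∈ S, ∃ C ∈ P, CoveredBy S C A) {Q : Query F Pr} (T : SLDTree F Pr P Q)
    {N : ℕ} (hN : ∀ p ∈ T.dom, p.length < N) (k : ℕ) :
    ∀ p ∈ T.dom, N ≤ p.length + k → ∀ θ : Subst F, Query.Ground (Query.subst θ (T.label p)) →
      SpecModels S (Query.subst θ (T.label p)) →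
      SpecModels {A | MP P A} (Query.subst θ (T.label p)) := by
  induction k with
  | zero => intro p hp hk; exact absurd (hN p hp) (by omega)
  | succ k ih =>
    intro p hp hk θ hg hS
    by_cases hnil : T.label p = []
    · simp [hnil, Query.subst, SpecModels]
    have hlt := T.sel_lt p hp hnil
    obtain ⟨l, a, r, hQ, hl⟩ : ∃ l a r, T.label p = l ++ a :: r ∧ T.sel p = l.length := by
      refine ⟨(T.label p).take (T.sel p), (T.label p)[T.sel p], (T.label p).drop (T.sel p + 1),
        ?_, ?_⟩
      · rw [List.getElem_cons_drop, List.take_append_drop]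
      · simp [hlt.le]
    have hsplit : Query.subst θ (T.label p) =
        Query.subst θ l ++ EAtom.subst θ a :: Query.subst θ r := by
      simp [hQ, Query.subst]
    rw [hsplit] at hg hS ⊢
    rw [Query.ground_iff] at hg
    have hdepth : ∀ j : ℕ, N ≤ (p ++ [j]).length + k := fun j => by simp; omega
    cases a with
    | cut =>
      obtain ⟨hdom, hlab, -⟩ := T.cut_step p hp l r hQ hl
      have hlab' : Query.subst θ (T.label (p ++ [0])) = Query.subst θ l ++ Query.subst θ r := by
        simp [hlab, Query.subst]
      have := ih _ hdom (hdepth 0) θ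
        (by rw [hlab', Query.ground_iff]; intro b hb; apply hg; simp at hb ⊢; tauto)
        (by rw [hlab']; intro b hb; apply hS; simp at hb ⊢; tauto)
      rw [hlab'] at this
      intro b hb
      rcases (by simpa using hb : b ∈ Query.subst θ l ∨ b = EAtom.subst θ .cut ∨
        b ∈ Query.subst θ r) with hb | rfl | hb
      · exact this b (by simp [hb])
      · trivial
      · exact this b (by simp [hb])
    | atm A =>
      have hAS : A.subst θ ∈ S := hS (.atm (A.subst θ)) (by simp [EAtom.subst])
      obtain ⟨C₀, hC₀, σ, hσg, hσA, hσS⟩ := hcov _ hAS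
      have hmem : C₀ ∈ applicables P A := by
        simpa [applicables, hC₀] using applicable_of_subst_eq hσA.symm
      obtain ⟨j, hj, hjC⟩ := List.getElem_of_mem hmem
      have hdom := (T.atom_children_mem p hp l A r hQ hl j).2 hj
      obtain ⟨C, C₁, hC₁, -, hvar, hmgu, -, -, hlab, hdisj⟩ :=
        T.atom_step p hp l A r hQ hl j hdom
      obtain rfl : C₀ = C₁ := by
        rw [List.getElem?_eq_getElem hj, hjC] at hC₁
        exact Option.some.inj hC₁
      have hpath : Query.vars (l ++ .atm A :: r) ⊆ pathVarsAux T.label T.esub T.ecls p := by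
        rw [← hQ]
        exact fun n hn => ⟨p, List.prefix_refl p, Or.inl hn⟩
      obtain ⟨δ, hδ⟩ := lift_resolvent hσA.symm hvar hmgu (hdisj.mono_right hpath)
      rw [← hlab] at hδ
      have hσb : Query.Ground (Query.subst σ C₀.body) := (Set.union_empty_iff.1 hσg).2
      rw [Query.ground_iff] at hσb
      have := ih _ hdom (hdepth j) δ
        (by
          rw [hδ, Query.ground_iff]; intro b hb
          rcases (by simpa using hb : b ∈ Query.subst θ l ∨ b ∈ Query.subst σ C₀.body ∨
            b ∈ Query.subst θ r) with hb | hb | hb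
          · exact hg b (by simp [hb])
          · exact hσb b hb
          · exact hg b (by simp [hb]))
        (by
          rw [hδ]; intro b hb
          rcases (by simpa using hb : b ∈ Query.subst θ l ∨ b ∈ Query.subst σ C₀.body ∨
            b ∈ Query.subst θ r) with hb | hb | hb
          · exact hS b (by simp [hb])
          · exact hσS b hb
          · exact hS b (by simp [hb]))
      rw [hδ] at this
      intro b hb
      rcases (by simpa using hb : b ∈ Query.subst θ l ∨ b = EAtom.subst θ (.atm A) ∨
        b ∈ Query.subst θ r) with hb | rfl | hb
      · exact this b (by simp [hb])
      · change MP P (A.subst θ)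
        rw [← hσA]
        exact MP.step C₀ hC₀ σ hσg fun B hB => this (.atm B) (by simp [hB])
      · exact this b (by simp [hb])

/-- **Theorem (semi-completeness).**  If every atom of the specification `S` is covered
w.r.t. `S` by `P`, then `P` is semi-complete w.r.t. `S`: for every query `Q` for which a
finite SLD-tree exists and every ground instance `Qθ` with `S ⊨ Qθ`, every atom of `Qθ`
other than the cut is in the least Herbrand model of `P`. -/
theorem covered_implies_semiComplete {F Pr : Type} (P : Prog F Pr)
    (S : Set (Atom F Pr)) (hSg : ∀ A ∈ S, A.Ground)
    (hcov : ∀ A ∈ S, ∃ C ∈ P, CoveredBy S C A) :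
    ∀ Q : Query F Pr, (∃ T : SLDTree F Pr P Q, T.dom.Finite) →
      ∀ θ : Subst F, Query.Ground (Query.subst θ Q) → SpecModels S (Query.subst θ Q) →
        ∀ a ∈ Query.subst θ Q, a = EAtom.cut ∨ ∃ A : Atom F Pr, a = .atm A ∧ MP P A := by
  rintro Q ⟨T, hfin⟩ θ hg hS a ha
  obtain ⟨N, hN⟩ := (hfin.image List.length).bddAbove
  have hroot := node_complete hcov T (N := N + 1)
    (fun p hp => Nat.lt_succ_of_le (hN ⟨p, hp, rfl⟩)) (N + 1) [] T.root_mem (by simp) θ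
  rw [T.root_label] at hroot
  cases a with
  | cut => exact Or.inl rfl
  | atm A => exact Or.inr ⟨A, rfl, hroot hg hS _ ha⟩

end LP
end

section
/- Let P be a program and (pre, post) a c-s-specification. If every clause of P is well-asserted with respect to (pre, post), then P is c-s-correct with respect to (pre, post). -/
namespace LP

variable {F Pr : Type}

/-! ### Composition of substitutions -/

theorem Tm.subst_comp (θ σ : Subst F) : ∀ t : Tm F,
    t.subst (Subst.comp θ σ) = (t.subst θ).subst σ
  | .var n => by simp [Tm.subst, Subst.comp]
  | .fn f ts => by
    simp only [Tm.subst, Tm.fn.injEq, true_and, List.map_attach_eq_pmap, List.pmap_eq_map,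
      List.map_map]
    apply List.map_congr_left
    intro t ht
    exact Tm.subst_comp θ σ t
decreasing_by
  have := List.sizeOf_lt_of_mem ht
  simp only [Tm.fn.sizeOf_spec]
  omega

theorem Tm.subst_idS : ∀ t : Tm F, t.subst Subst.idS = t
  | .var n => by simp [Tm.subst, Subst.idS]
  | .fn f ts => by
    simp only [Tm.subst, Tm.fn.injEq, true_and, List.map_attach_eq_pmap, List.pmap_eq_map]
    refine (List.map_congr_left (g := id) ?_).trans (List.map_id _)
    intro t ht
    exact Tm.subst_idS t
decreasing_by
  have := List.sizeOf_lt_of_mem ht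
  simp only [Tm.fn.sizeOf_spec]
  omega

theorem Atom.subst_comp (θ σ : Subst F) (A : Atom F Pr) :
    A.subst (Subst.comp θ σ) = (A.subst θ).subst σ := by
  simp [Atom.subst, Tm.subst_comp]

theorem Atom.subst_idS (A : Atom F Pr) : A.subst Subst.idS = A := by
  have h : Tm.subst (Subst.idS : Subst F) = id := funext Tm.subst_idS
  simp [Atom.subst, h]

theorem EAtom.subst_comp (θ σ : Subst F) (a : EAtom F Pr) :
    a.subst (Subst.comp θ σ) = (a.subst θ).subst σ := by
  cases a <;> simp [EAtom.subst, Atom.subst_comp]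

theorem EAtom.subst_idS (a : EAtom F Pr) : a.subst Subst.idS = a := by
  cases a <;> simp [EAtom.subst, Atom.subst_idS]

theorem Query.subst_comp (θ σ : Subst F) (Q : Query F Pr) :
    Query.subst (Subst.comp θ σ) Q = Query.subst σ (Query.subst θ Q) := by
  simp [Query.subst, EAtom.subst_comp]

theorem Query.subst_idS (Q : Query F Pr) : Query.subst Subst.idS Q = Q := by
  have h : EAtom.subst (Pr := Pr) (Subst.idS : Subst F) = id := funext EAtom.subst_idS
  simp [Query.subst, h]

theorem Subst.idS_comp (σ : Subst F) : Subst.comp Subst.idS σ = σ := by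
  funext n
  simp [Subst.comp, Subst.idS, Tm.subst]

/-- `compN` is defined by splitting off the first substitution; here the last one is split off. -/
theorem Atom.subst_compN_succ (s : ℕ → Subst F) (k : ℕ) : ∀ (j : ℕ) (A : Atom F Pr),
    A.subst (compN s j (k + 1)) = (A.subst (compN s j k)).subst (s (j + k)) := by
  induction k with
  | zero => intro j A; simp [compN, Atom.subst_comp, Atom.subst_idS]
  | succ k ih =>
    intro j A
    have h1 : compN s j (k + 1 + 1) = Subst.comp (s j) (compN s (j + 1) (k + 1)) := rfl
    have h2 : compN s j (k + 1) = Subst.comp (s j) (compN s (j + 1) k) := rfl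
    rw [h1, h2, Atom.subst_comp, Atom.subst_comp, ih, show j + 1 + k = j + (k + 1) by omega]

/-! ### Conditional well-assertedness of a query -/

/-- Each atom of the query is in `pre ∪ {!}` provided all preceding ones are in `post ∪ {!}`,
and `Z` holds provided all atoms of the query are in `post ∪ {!}`. -/
def Chain (pre post : Set (Atom F Pr)) : Query F Pr → Prop → Prop
  | [], Z => Z
  | a :: Q, Z => EAtomIn pre a ∧ (EAtomIn post a → Chain pre post Q Z)

theorem chain_append (pre post : Set (Atom F Pr)) (Q R : Query F Pr) (Z : Prop) :
    Chain pre post (Q ++ R) Z ↔ Chain pre post Q (Chain pre post R Z) := by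
  induction Q with
  | nil => rfl
  | cons a Q ih => simp only [List.cons_append, Chain, ih]

theorem Chain.mono {pre post : Set (Atom F Pr)} {Q : Query F Pr} {Z Z' : Prop}
    (h : Chain pre post Q Z) (hZ : Z → Z') : Chain pre post Q Z' := by
  induction Q with
  | nil => exact hZ h
  | cons a Q ih => exact ⟨h.1, fun ha => ih (h.2 ha)⟩

/-- Passage from the positional formulation of well-assertedness to `Chain`. -/
theorem chain_of_index (pre post : Set (Atom F Pr)) (Z : Prop) (Q : Query F Pr)
    (h1 : ∀ k < Q.length, (∀ i < k, QIn post Q i) → QIn pre Q k)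
    (h2 : (∀ i < Q.length, QIn post Q i) → Z) : Chain pre post Q Z := by
  induction Q with
  | nil => exact h2 (by simp)
  | cons a Q ih =>
    have lift : ∀ k, EAtomIn post a → (∀ i < k, QIn post Q i) →
        ∀ i < k + 1, QIn post (a :: Q) i := by
      intro k ha hk i hi
      cases i with
      | zero => simpa [QIn] using ha
      | succ i => simpa [QIn] using hk i (by omega)
    refine ⟨?_, fun ha => ih ?_ ?_⟩
    · simpa [QIn] using h1 0 (by simp) (by simp)
    · intro k hk hi
      simpa [QIn] using h1 (k + 1) (by simpa using hk) (lift k ha hi)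
    · intro hi
      exact h2 (lift _ ha hi)

theorem WellAssertedClause.chain {pre post : Set (Atom F Pr)} {C0 C : Clause F Pr}
    (h : WellAssertedClause pre post C0) (hC : Clause.Inst C C0) (σ : Subst F)
    (hH : C.head.subst σ ∈ pre) :
    Chain pre post (Query.subst σ C.body) (C.head.subst σ ∈ post) := by
  obtain ⟨ρ, rfl⟩ := hC
  simp only [Clause.subst] at hH ⊢
  rw [← Atom.subst_comp] at hH
  rw [← Atom.subst_comp, ← Query.subst_comp]
  obtain ⟨h1, h2⟩ := h _ hH
  have hl : (Query.subst (Subst.comp ρ σ) C0.body).length = C0.body.length := by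
    simp [Query.subst]
  exact chain_of_index pre post _ _ (by rw [hl]; exact h1) (by rw [hl]; exact h2)

/-! ### LD-steps and correctness -/

/-- One LD-step acting on a query `G ++ R` with `G` nonempty preserves the invariant that all
instances of the prefix satisfy `Chain`; the goal `Z` gets composed with the mgu of the step. -/
theorem chain_step {P : Prog F Pr} {pre post : Set (Atom F Pr)}
    (hwa : ∀ C ∈ P, WellAssertedClause pre post C)
    {G R Q' : Query F Pr} {θ : Subst F} {oc : Option (Clause F Pr)} {Z : Subst F → Prop}
    (hG : G ≠ []) (hs : DStep (G ++ R) Q' θ oc)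
    (hc : ∀ C, oc = some C → ∃ C0 ∈ P, Variant C C0)
    (hch : ∀ σ, Chain pre post (Query.subst σ G) (Z σ)) :
    ∃ G', Q' = G' ++ Query.subst θ R ∧
      ∀ σ, Chain pre post (Query.subst σ G') (Z (Subst.comp θ σ)) := by
  obtain ⟨a, G, rfl⟩ := List.exists_cons_of_ne_nil hG
  rw [List.cons_append] at hs
  rcases hs with ⟨rest, hQ, rfl, rfl, -⟩ | ⟨A, rest, C, hQ, hoc, hmgu, -, -, rfl⟩
  · obtain ⟨rfl, rfl⟩ := List.cons.inj hQ
    refine ⟨G, by rw [Query.subst_idS], fun σ => ?_⟩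
    rw [Subst.idS_comp]
    exact (hch σ).2 trivial
  · obtain ⟨rfl, rfl⟩ := List.cons.inj hQ
    refine ⟨Query.subst θ (C.body ++ G), by simp [Query.subst], fun σ => ?_⟩
    obtain ⟨C0, hC0, hvar⟩ := hc C hoc
    have hA : A.subst (Subst.comp θ σ) = C.head.subst (Subst.comp θ σ) := by
      rw [Atom.subst_comp, Atom.subst_comp, show A.subst θ = C.head.subst θ from hmgu.1]
    obtain ⟨hp, hrest⟩ := hch (Subst.comp θ σ)
    have hp' : C.head.subst (Subst.comp θ σ) ∈ pre := hA ▸ hp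
    have hb := (hwa C0 hC0).chain hvar.1 _ hp'
    rw [← Query.subst_comp, Query.subst, List.map_append]
    exact (chain_append _ _ _ _ _).2 (hb.mono fun hpost => hrest (show A.subst _ ∈ post from hA ▸ hpost))

/-- **Theorem (c-s-correctness).**  If every clause of `P` is well-asserted w.r.t. the
c-s-specification `(pre, post)`, then `P` is c-s-correct w.r.t. `(pre, post)`. -/
theorem wellAsserted_csCorrect {F Pr : Type} (P : Prog F Pr)
    (pre post : Set (Atom F Pr))
    (hpre : SubstClosed pre) (hpost : SubstClosed post)
    (hwa : ∀ C ∈ P, WellAssertedClause pre post C) :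
    CsCorrect P pre post := by
  intro D hD hinit
  -- The whole query serves as the prefix here, with a trivial final goal.
  have inv : ∀ i ≤ D.len, ∀ σ, Chain pre post (Query.subst σ (D.Q i)) True := by
    intro i
    induction i with
    | zero =>
      intro _ σ
      obtain ⟨A, hA, hQ⟩ := hinit
      rw [hQ]
      exact ⟨hpre A hA σ, fun _ => trivial⟩
    | succ i ih =>
      intro hi
      have hs := D.step i (by omega)
      have hne : D.Q i ≠ [] := by
        rcases hs with ⟨_, h, _⟩ | ⟨_, _, _, h, _⟩ <;> simp [h]
      rw [← List.append_nil (D.Q i)] at hs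
      obtain ⟨G', hQ', hG'⟩ := chain_step (Z := fun _ => True) hwa hne hs
        (hD i (by omega)) (ih (by omega))
      rw [hQ']
      simpa [Query.subst] using hG'
  refine ⟨?_, ?_⟩
  · intro i hi a rest hQ
    have h := inv i hi Subst.idS
    rw [Query.subst_idS, hQ] at h
    cases a with
    | cut => exact Or.inl rfl
    | atm A => exact Or.inr ⟨A, h.1, rfl⟩
  · rintro j m A rest hQ ⟨hjm, hm, hlong, hend⟩
    -- The prefix descends from the selected atom `A`; `R` is the protected suffix.
    have key : ∀ k, j + k ≤ m → ∃ G R : Query F Pr, D.Q (j + k) = G ++ R ∧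
        R.length = rest.length ∧ ∀ σ, Chain pre post (Query.subst σ G)
          ((A.subst (compN D.sub j k)).subst σ ∈ post) := by
      intro k
      induction k with
      | zero =>
        intro _
        refine ⟨[.atm A], rest, hQ, rfl, fun σ => ?_⟩
        have h := inv j (by omega) σ
        rw [hQ] at h
        refine ⟨h.1, fun hp => ?_⟩
        change (A.subst Subst.idS).subst σ ∈ post
        rw [Atom.subst_idS]
        exact hp
      | succ k ih =>
        intro hk
        obtain ⟨G, R, hGR, hR, hch⟩ := ih (by omega)
        have hl := hlong (j + k) (by omega) (by omega)
        have hG : G ≠ [] := by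
          rintro rfl
          rw [hGR, List.nil_append] at hl
          omega
        have hs := D.step (j + k) (by omega)
        rw [hGR] at hs
        obtain ⟨G', hQ', hG'⟩ := chain_step hwa hG hs (hD (j + k) (by omega)) hch
        refine ⟨G', _, hQ', by simpa [Query.subst] using hR, fun σ => ?_⟩
        rw [Atom.subst_compN_succ, ← Atom.subst_comp]
        exact hG' σ
    obtain ⟨G, R, hGR, hR, hch⟩ := key (m - j) (by omega)
    rw [show j + (m - j) = m by omega] at hGR
    have hG : G = [] := by
      rw [hGR, List.length_append] at hend
      exact List.eq_nil_of_length_eq_zero (by omega)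
    subst hG
    have h := hch Subst.idS
    rw [Atom.subst_idS] at h
    exact h

end LP
end
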